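/- Conserved quantities as quantum determinants with a defect: under these hypotheses, for every 0 ≤ m ≤ r+1 and every n ∈ ℤ, C_m·M_{r+1,n} = Σ_v c_v(q)·∏_{i=1}^{r+1} M_{n+e_i(m)−v_i} (ordered product over i = 1,…,r+1), where the finite sum runs over the exponent vectors v ∈ ℤ^{r+1} in the support of Δ_q(u_1,…,u_{r+1}) with coefficients c_v ∈ ℤ[q], and e_i(m) := 1 if i ≤ m and e_i(m) := 0 otherwise. In particular, taking n = 0 (where M_{r+1,0} = Δ), C_m = (Σ_v c_v(q)·∏_{i=1}^{r+1} M_{e_i(m)−v_i})·Δ^{−1}. -/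

import Mathlib

/-- ξ_{α,n} := M_{α,n} · M_{α,n+1}⁻¹ -/
def xiv {R : Type*} [Ring R] (M Mi : ℕ → ℤ → R) (α : ℕ) (n : ℤ) : R :=
  M α n * Mi α (n + 1)

/-- ξ_{α,n}⁻¹ = M_{α,n+1} · M_{α,n}⁻¹ -/
def xivInv {R : Type*} [Ring R] (M Mi : ℕ → ℤ → R) (α : ℕ) (n : ℤ) : R :=
  M α (n + 1) * Mi α n

/-- x_{α,n} := ξ_{α,n}⁻¹ · ξ_{α-1,n} -/
def xv {R : Type*} [Ring R] (M Mi : ℕ → ℤ → R) (α : ℕ) (n : ℤ) : R :=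
  xivInv M Mi α n * xiv M Mi (α - 1) n

/-- The Miura coefficient C_{m,n} = Σ_{r+1 ≥ α₁ > ⋯ > α_m ≥ 1}
∏_{j=1}^m x_{α_j, n+(r+1-α_j)-(j-1)} (ordered product, j increasing left to right). -/
def CMiura {R : Type*} [Ring R] (M Mi : ℕ → ℤ → R) (r : ℕ) (m : ℕ) (n : ℤ) : R :=
  ∑ S ∈ Finset.powersetCard m (Finset.Icc 1 (r + 1)),
    (((S.sort (· ≤ ·)).reverse.zipIdx).map
      (fun ji => xv M Mi ji.1 (n + ((r : ℤ) + 1 - (ji.1 : ℤ)) - (ji.2 : ℤ)))).prod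

/-- The set of pairs (a,b) with 1 ≤ a < b ≤ α (0-indexed as Fin α). -/
def qvPairs (α : ℕ) : Finset (Fin α × Fin α) :=
  Finset.univ.filter fun p => p.1 < p.2

/-- The exponent of u_i in the monomial of Δ_q(u₁,…,u_α) = ∏_{a<b} (1 - q·u_b·u_a⁻¹)
obtained by choosing the term -q·u_b·u_a⁻¹ exactly for the pairs (a,b) ∈ S. -/
def qvExp (α : ℕ) (S : Finset (Fin α × Fin α)) (i : Fin α) : ℤ :=
  ((S.filter fun p => p.2 = i).card : ℤ) - ((S.filter fun p => p.1 = i).card : ℤ)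

/-!
The Miura operator `L_{α,n} = ∑ₘ (-1)ᵐ C_{α,m,n} Tᵐ`, with `T` the shift `(T f)(b) = f (b - 1)`, has
two factorizations, one in the variables `x_{α,n} = ξ_{α,n}⁻¹ ξ_{α-1,n}` and one in
`y_{α,n} = ξ_{α,n}⁻¹ ξ_{α-1,n-1}`. Comparing them shows that `L_{r+1,n}` does not depend on `n`, so
its coefficients are conserved, and that `L_{α,n}` sends the sequence `b ↦ M_{1,b}` to
`M_{α+1,n} M_{α,n}⁻¹` at `b = n` and to `0` at `b = n + 1, …, n + α`; in particular
`L_{r+1,n} M_1 = 0`.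

Since left multiplication by `M_{1,x} - M_{1,x+1} T` can be moved through `L_{r+1,n}`, this linear
recurrence, applied to the `2 × 2` quantum minors of the sequence `M_1`, proves by induction on
the distance of the rows that they are antisymmetric. Larger quantum determinants are then
antisymmetric as well, once their row indices `ν_i` are replaced by `ν_i - i`.

Finally, apply `L_{α,n}` to a quantum determinant in its first row. If the other rows are `α` copies
of `n`, antisymmetry kills all terms but `T⁰`, and by induction the determinant with `α + 1` equal
rows `n` is `M_{α+1,n}`. If the other rows are `α - 1` in number, the first `m` of them equal to
`n + 1` and the rest to `n`, only the terms `T⁰` and `Tᵐ⁺¹` survive. Their sum vanishes, so the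
determinant with defect in its first `m + 1` rows is `C_{α,m+1,n} M_{α,n}`.
-/

section QCommute

variable {R : Type*} [Monoid R] {q : Rˣ} {k l : ℤ} {x y y' z : R}

theorem commute_inverse_right (h : Commute x y) (hy : y * y' = 1) (hy' : y' * y = 1) :
    Commute x y' :=
  (show Commute x ((⟨y, y', hy, hy'⟩ : Rˣ) : R) from h).units_inv_right

/-- `x` and `y` commute up to the scalar `q ^ k`: the relation `x y = q ^ k y x`. -/
def QCommute (q : Rˣ) (k : ℤ) (x y : R) : Prop :=
  x * y = ((q ^ k : Rˣ) : R) * (y * x)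

theorem commute_zpow_of_commute (hq : ∀ x : R, Commute (q : R) x) (k : ℤ) (x : R) :
    Commute ((q ^ k : Rˣ) : R) x :=
  ((hq x).symm.units_zpow_right k).symm

theorem QCommute.commute (h : QCommute q 0 x y) : Commute x y := by
  rwa [QCommute, zpow_zero, Units.val_one, one_mul] at h

theorem QCommute.symm (h : QCommute q k x y) : QCommute q (-k) y x := by
  rw [QCommute, h, ← mul_assoc, ← Units.val_mul, ← zpow_add, neg_add_cancel, zpow_zero,
    Units.val_one, one_mul]

theorem QCommute.mul_right (hq : ∀ x : R, Commute (q : R) x)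
    (hxy : QCommute q k x y) (hxz : QCommute q l x z) : QCommute q (k + l) x (y * z) := by
  calc x * (y * z) = ((q ^ k : Rˣ) : R) * (y * (x * z)) := by
        rw [← mul_assoc, hxy]; simp only [mul_assoc]
    _ = ((q ^ k : Rˣ) : R) * (((q ^ l : Rˣ) : R) * (y * (z * x))) := by
        rw [hxz, (commute_zpow_of_commute hq l y).symm.left_comm]
    _ = ((q ^ (k + l) : Rˣ) : R) * (y * z * x) := by
        rw [zpow_add, Units.val_mul]; simp only [mul_assoc]

theorem QCommute.inv_right (hq : ∀ x : R, Commute (q : R) x) (hy : y * y' = 1) (hy' : y' * y = 1)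
    (h : QCommute q k x y) : QCommute q (-k) x y' := by
  calc x * y' = y' * (y * x) * y' := by rw [← mul_assoc y', hy', one_mul]
    _ = ((q ^ (-k) : Rˣ) : R) * (y' * x * (y * y')) := by
        rw [h.symm, (commute_zpow_of_commute hq (-k) y').symm.left_comm]
        simp only [mul_assoc]
    _ = ((q ^ (-k) : Rˣ) : R) * (y' * x) := by rw [hy, mul_one]

end QCommute

/-- The variable `y_{α,n} = ξ_{α,n}⁻¹ ξ_{α-1,n-1}`, which plays the role of `x_{α,n}` in the second
factorization of the Miura operator. -/
def yv {R : Type*} [Ring R] (M Mi : ℕ → ℤ → R) (α : ℕ) (n : ℤ) : R :=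
  xivInv M Mi α n * xiv M Mi (α - 1) (n - 1)

/-- The family `M` solves the quantum M-system of rank `r` with parameter `q`, and `Mi α n` is the
inverse of `M α n` for `α ≤ r + 1`. The recurrence is indexed by `β = α - 1`. -/
structure QuantumMSystem {R : Type*} [Ring R] (q : Rˣ) (r : ℕ) (M Mi : ℕ → ℤ → R) : Prop where
  central : ∀ x : R, Commute (q : R) x
  zero_eq_one : ∀ n, M 0 n = 1
  top_eq_zero : ∀ n, M (r + 2) n = 0
  mul_inv : ∀ α n, α ≤ r + 1 → M α n * Mi α n = 1
  inv_mul : ∀ α n, α ≤ r + 1 → Mi α n * M α n = 1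
  recurrence : ∀ β n, β ≤ r →
    (q : R) ^ (β + 1) * M (β + 1) (n + 1) * M (β + 1) (n - 1) =
      M (β + 1) n ^ 2 - M (β + 2) n * M β n
  qCommute : ∀ (α β : ℕ) (m n : ℤ), α ≤ r + 1 → β ≤ r + 1 → |n - m| ≤ |(β : ℤ) - α| + 1 →
    QCommute q ((n - m) * min α β) (M α m) (M β n)

namespace QuantumMSystem

variable {R : Type*} [Ring R] {q : Rˣ} {r : ℕ} {M Mi : ℕ → ℤ → R} (H : QuantumMSystem q r M Mi)
include H

theorem inv_zero_eq_one (n : ℤ) : Mi 0 n = 1 := by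
  simpa [H.zero_eq_one] using H.mul_inv 0 n (Nat.zero_le _)

theorem xiv_mul_xivInv {α : ℕ} (hα : α ≤ r + 1) (n : ℤ) : xiv M Mi α n * xivInv M Mi α n = 1 := by
  rw [xiv, xivInv, mul_assoc, ← mul_assoc (Mi α (n + 1)), H.inv_mul _ _ hα, one_mul,
    H.mul_inv _ _ hα]

theorem xivInv_mul_self {α : ℕ} (hα : α ≤ r + 1) (n : ℤ) :
    xivInv M Mi α n * M α n = M α (n + 1) := by
  rw [xivInv, mul_assoc, H.inv_mul _ _ hα, mul_one]

theorem commute_succ {β : ℕ} (hβ : β ≤ r) (n : ℤ) : Commute (M β n) (M (β + 1) n) := by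
  have h := H.qCommute β (β + 1) n n (by lia) (by lia) (by simp)
  exact QCommute.commute (by simpa using h)

theorem qCommute_self {α : ℕ} (hα : α ≤ r + 1) (n : ℤ) :
    QCommute q α (M α n) (M α (n + 1)) := by
  simpa using H.qCommute α α n (n + 1) hα hα (by simp)

theorem commute_ratio_succ {β : ℕ} (hβ : β ≤ r) (n : ℤ) :
    Commute (M β (n + 1)) (M (β + 1) n * Mi β n) := by
  have hsucc : QCommute q β (M (β + 1) n) (M β (n + 1)) := by
    simpa using H.qCommute (β + 1) β n (n + 1) (by lia) (by lia) (by simp)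
  have hinv := (H.qCommute_self (by lia) n).symm.inv_right H.central
    (H.mul_inv β n (by lia)) (H.inv_mul β n (by lia))
  exact QCommute.commute (by simpa using hsucc.symm.mul_right H.central hinv)

theorem xiv_mul_ratio {β : ℕ} (hβ : β ≤ r) (n : ℤ) :
    xiv M Mi β n * (M (β + 1) n * Mi β n) = M (β + 1) n * Mi β (n + 1) := by
  have hinv : Commute (Mi β (n + 1)) (M (β + 1) n * Mi β n) :=
    (commute_inverse_right (H.commute_ratio_succ hβ n).symm
      (H.mul_inv _ _ (by lia)) (H.inv_mul _ _ (by lia))).symm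
  calc xiv M Mi β n * (M (β + 1) n * Mi β n)
      = M β n * M (β + 1) n * Mi β n * Mi β (n + 1) := by
        rw [xiv, mul_assoc, hinv.eq]; simp only [mul_assoc]
    _ = M (β + 1) n * (M β n * Mi β n) * Mi β (n + 1) := by
        rw [(H.commute_succ hβ n).eq]; simp only [mul_assoc]
    _ = M (β + 1) n * Mi β (n + 1) := by rw [H.mul_inv _ _ (by lia), mul_one]

theorem commute_inv_succ {β : ℕ} (hβ : β ≤ r) (n : ℤ) : Commute (M β n) (Mi (β + 1) n) :=
  commute_inverse_right (H.commute_succ hβ n)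
    (H.mul_inv _ _ (by lia)) (H.inv_mul _ _ (by lia))

theorem sub_xivInv_mul_pred {β : ℕ} (hβ : β ≤ r) (n : ℤ) :
    M (β + 1) n - xivInv M Mi (β + 1) n * M (β + 1) (n - 1) =
      M (β + 2) n * Mi (β + 1) n * M β n := by
  have hβ' : β + 1 ≤ r + 1 := by lia
  have hpred : Mi (β + 1) n * M (β + 1) (n - 1) =
      (q : R) ^ (β + 1) * (M (β + 1) (n - 1) * Mi (β + 1) n) := by
    have h := ((H.qCommute_self hβ' (n - 1)).inv_right H.central
      (H.mul_inv _ _ hβ') (H.inv_mul _ _ hβ')).symm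
    rwa [sub_add_cancel, neg_neg, QCommute, zpow_natCast, Units.val_pow_eq_pow_val] at h
  calc M (β + 1) n - xivInv M Mi (β + 1) n * M (β + 1) (n - 1)
      = M (β + 1) n - (q : R) ^ (β + 1) * M (β + 1) (n + 1) * M (β + 1) (n - 1) * Mi (β + 1) n := by
        rw [xivInv, mul_assoc, hpred, ((H.central _).symm.pow_right _).left_comm]
        simp only [mul_assoc]
    _ = M (β + 2) n * (M β n * Mi (β + 1) n) := by
        rw [H.recurrence β n hβ, sub_mul, pow_two, mul_assoc, H.mul_inv _ _ hβ', mul_one,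
          sub_sub_cancel, mul_assoc]
    _ = M (β + 2) n * Mi (β + 1) n * M β n := by
        rw [(H.commute_inv_succ hβ n).eq, mul_assoc]

theorem xv_sub_yv {β : ℕ} (hβ : β + 1 ≤ r) (n : ℤ) :
    xv M Mi (β + 2) n - yv M Mi (β + 2) n =
      M (β + 2) (n + 1) * Mi (β + 1) (n + 1) * (M β n * Mi (β + 1) n) := by
  have hβ₁ : β + 1 ≤ r + 1 := by lia
  have hξ : xiv M Mi (β + 1) n - xiv M Mi (β + 1) (n - 1) =
      M (β + 2) n * Mi (β + 1) (n + 1) * (M β n * Mi (β + 1) n) := by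
    calc xiv M Mi (β + 1) n - xiv M Mi (β + 1) (n - 1)
        = xiv M Mi (β + 1) n *
            (M (β + 1) n - xivInv M Mi (β + 1) n * M (β + 1) (n - 1)) * Mi (β + 1) n := by
          rw [mul_sub, ← mul_assoc, H.xiv_mul_xivInv hβ₁, one_mul, sub_mul, mul_assoc,
            H.mul_inv _ _ hβ₁, mul_one, xiv, xiv, sub_add_cancel]
      _ = M (β + 2) n * Mi (β + 1) (n + 1) * (M β n * Mi (β + 1) n) := by
          rw [H.sub_xivInv_mul_pred (by lia), ← mul_assoc, H.xiv_mul_ratio hβ, mul_assoc]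
  rw [xv, yv, ← mul_sub, Nat.add_succ_sub_one, hξ, ← mul_assoc,
    ← mul_assoc (xivInv _ _ _ _), H.xivInv_mul_self (by lia)]

theorem xv_sub_yv_succ {β : ℕ} (hβ : β ≤ r) (n : ℤ) :
    xv M Mi (β + 1) n - yv M Mi (β + 1) (n + 1) =
      M (β + 2) (n + 1) * Mi (β + 1) (n + 1) * (M β n * Mi (β + 1) n) := by
  have hβ₀ : β ≤ r + 1 := by lia
  have hβ₁ : β + 1 ≤ r + 1 := by lia
  have ha : xivInv M Mi (β + 1) n - xivInv M Mi (β + 1) (n + 1) =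
      M (β + 2) (n + 1) * Mi (β + 1) (n + 1) * M β (n + 1) * Mi (β + 1) n := by
    rw [← H.sub_xivInv_mul_pred hβ, add_sub_cancel_right, sub_mul, mul_assoc, H.mul_inv _ _ hβ₁,
      mul_one, xivInv]
  have hcomm : Commute (M β (n + 1)) (M β n * Mi (β + 1) n) :=
    commute_inverse_right (H.commute_ratio_succ hβ n)
      (by rw [mul_assoc, ← mul_assoc (Mi β n), H.inv_mul _ _ hβ₀, one_mul, H.mul_inv _ _ hβ₁])
      (by rw [mul_assoc, ← mul_assoc (Mi (β + 1) n), H.inv_mul _ _ hβ₁, one_mul,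
        H.mul_inv _ _ hβ₀])
  calc xv M Mi (β + 1) n - yv M Mi (β + 1) (n + 1)
      = M (β + 2) (n + 1) * Mi (β + 1) (n + 1) *
          (M β (n + 1) * (Mi (β + 1) n * M β n)) * Mi β (n + 1) := by
        rw [xv, yv, Nat.add_sub_cancel, add_sub_cancel_right, ← sub_mul, ha, xiv]
        simp only [mul_assoc]
    _ = M (β + 2) (n + 1) * Mi (β + 1) (n + 1) * (M β n * Mi (β + 1) n) *
          (M β (n + 1) * Mi β (n + 1)) := by
        rw [← (H.commute_inv_succ hβ n).eq, hcomm.eq]; simp only [mul_assoc]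
    _ = M (β + 2) (n + 1) * Mi (β + 1) (n + 1) * (M β n * Mi (β + 1) n) := by
        rw [H.mul_inv _ _ hβ₀, mul_one]

theorem xv_add_yv {β : ℕ} (hβ : β + 1 ≤ r) (n : ℤ) :
    xv M Mi (β + 2) n + yv M Mi (β + 1) (n + 1) = xv M Mi (β + 1) n + yv M Mi (β + 2) n := by
  rw [← sub_eq_sub_iff_add_eq_add, H.xv_sub_yv hβ, H.xv_sub_yv_succ (by lia)]

theorem xv_mul_yv {β : ℕ} (hβ : β + 1 ≤ r) (n : ℤ) :
    xv M Mi (β + 2) n * yv M Mi (β + 1) n = yv M Mi (β + 2) n * xv M Mi (β + 1) (n - 1) := by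
  simp only [xv, yv, Nat.add_succ_sub_one, mul_assoc]
  rw [← mul_assoc (xiv M Mi _ n) (xivInv M Mi _ n), H.xiv_mul_xivInv (by lia),
    ← mul_assoc (xiv M Mi _ (n - 1)) (xivInv M Mi _ (n - 1)), H.xiv_mul_xivInv (by lia)]

theorem xv_top (n : ℤ) : xv M Mi (r + 1) n = yv M Mi (r + 1) (n + 1) := by
  rw [← sub_eq_zero, H.xv_sub_yv_succ le_rfl, H.top_eq_zero, zero_mul, zero_mul]

end QuantumMSystem

section Miura

variable {R : Type*} [Ring R]

/-- The shift operator `(T f)(b) = f (b - 1)` on sequences, linear for right multiplication. -/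
def shift (R : Type*) [Ring R] : Module.End Rᵐᵒᵖ (ℤ → R) :=
  LinearMap.funLeft Rᵐᵒᵖ R (· - 1)

theorem shift_mul_smul (x : R) (L : Module.End Rᵐᵒᵖ (ℤ → R)) :
    shift R * (x • L) = x • (shift R * L) := rfl

/-- The Miura operator `L_{α,n} = (1 - x_{α,n} T)(1 - x_{α-1,n+1} T) ⋯`, in which every passage of a
shift `T` to the left lowers the second index of the `x` to its right by one. -/
def miuraOp (M Mi : ℕ → ℤ → R) : ℕ → ℤ → Module.End Rᵐᵒᵖ (ℤ → R)
  | 0, _ => 1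
  | α + 1, n => miuraOp M Mi α (n + 1) - xv M Mi (α + 1) n • (shift R * miuraOp M Mi α n)

/-- The coefficient of `(-T) ^ m` in the Miura operator `L_{α,n}`. -/
def miuraCoeff (M Mi : ℕ → ℤ → R) : ℕ → ℕ → ℤ → R
  | _, 0, _ => 1
  | 0, _ + 1, _ => 0
  | α + 1, m + 1, n =>
    miuraCoeff M Mi α (m + 1) (n + 1) + xv M Mi (α + 1) n * miuraCoeff M Mi α m n

variable {M Mi : ℕ → ℤ → R}

theorem miuraOp_succ (α : ℕ) (n : ℤ) :
    miuraOp M Mi (α + 1) n =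
      miuraOp M Mi α (n + 1) - xv M Mi (α + 1) n • (shift R * miuraOp M Mi α n) := rfl

theorem miuraOp_succ_apply (α : ℕ) (n : ℤ) (f : ℤ → R) (b : ℤ) :
    miuraOp M Mi (α + 1) n f b =
      miuraOp M Mi α (n + 1) f b - xv M Mi (α + 1) n * miuraOp M Mi α n f (b - 1) := rfl

@[simp]
theorem miuraCoeff_zero_right (α : ℕ) (n : ℤ) : miuraCoeff M Mi α 0 n = 1 := by
  cases α <;> rfl

theorem miuraCoeff_eq_zero_of_lt {α m : ℕ} (hm : α < m) (n : ℤ) : miuraCoeff M Mi α m n = 0 := by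
  induction α generalizing m n with
  | zero => obtain _ | m := m <;> [lia; rfl]
  | succ α ih =>
    obtain _ | m := m
    · lia
    · rw [miuraCoeff, ih (by lia), ih (by lia), mul_zero, add_zero]

theorem miuraOp_apply (α : ℕ) (n : ℤ) (f : ℤ → R) (b : ℤ) :
    miuraOp M Mi α n f b =
      ∑ k ∈ Finset.range (α + 1), (-1) ^ k * (miuraCoeff M Mi α k n * f (b - k)) := by
  induction α generalizing n b with
  | zero => simp [miuraOp]
  | succ α ih =>
    have hextend : miuraOp M Mi α (n + 1) f b = ∑ k ∈ Finset.range (α + 1 + 1),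
        (-1) ^ k * (miuraCoeff M Mi α k (n + 1) * f (b - k)) := by
      rw [Finset.sum_range_succ, ← ih, miuraCoeff_eq_zero_of_lt (Nat.lt_succ_self α), zero_mul,
        mul_zero, add_zero]
    rw [miuraOp_succ_apply, hextend, ih, Finset.sum_range_succ', Finset.sum_range_succ' _ (α + 1),
      add_sub_right_comm, Finset.mul_sum, ← Finset.sum_sub_distrib]
    congr 1
    · refine Finset.sum_congr rfl fun k _ => ?_
      have hsign : xv M Mi (α + 1) n * ((-1) ^ k * (miuraCoeff M Mi α k n * f (b - 1 - k))) =
          (-1) ^ k * (xv M Mi (α + 1) n * (miuraCoeff M Mi α k n * f (b - 1 - k))) :=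
        ((Commute.neg_one_right _).pow_right k).left_comm _
      rw [hsign, miuraCoeff, pow_succ, mul_neg_one, sub_sub, Nat.cast_succ, add_comm (1 : ℤ)]
      noncomm_ring
    · simp

theorem miuraOp_comp_sub (α : ℕ) (n : ℤ) (f : ℤ → R) (b e : ℤ) :
    miuraOp M Mi α n (fun a => f (a - e)) b = miuraOp M Mi α n f (b - e) := by
  simp only [miuraOp_apply, sub_right_comm]

theorem miuraOp_apply_eq_self {α : ℕ} {f : ℤ → R} {b : ℤ}
    (hf : ∀ a, b - α ≤ a → a < b → f a = 0) (n : ℤ) : miuraOp M Mi α n f b = f b := by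
  rw [miuraOp_apply, Finset.sum_range_succ', Finset.sum_eq_zero, zero_add]
  · simp
  · intro k hk
    rw [hf _ (by simp at hk; lia) (by lia), mul_zero, mul_zero]

theorem miuraOp_apply_single {α m : ℕ} (hm : m ≤ α) (n : ℤ) :
    miuraOp M Mi α n (Pi.single 0 1) m = (-1) ^ m * miuraCoeff M Mi α m n := by
  rw [miuraOp_apply, Finset.sum_eq_single m]
  · simp
  · intro k _ hk
    rw [Pi.single_eq_of_ne (by lia), mul_zero, mul_zero]
  · simp; lia

end Miura

namespace QuantumMSystem

variable {R : Type*} [Ring R] {q : Rˣ} {r : ℕ} {M Mi : ℕ → ℤ → R} (H : QuantumMSystem q r M Mi)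
include H

theorem xiv_zero (n : ℤ) : xiv M Mi 0 n = 1 := by
  rw [xiv, H.zero_eq_one, H.inv_zero_eq_one, mul_one]

theorem miuraOp_succ_eq_yv {α : ℕ} (hα : α ≤ r) (n : ℤ) :
    miuraOp M Mi (α + 1) n =
      miuraOp M Mi α n - yv M Mi (α + 1) n • (shift R * miuraOp M Mi α (n - 1)) := by
  induction α generalizing n with
  | zero => simp only [miuraOp, xv, yv, zero_add, Nat.sub_self, H.xiv_zero]
  | succ α ih =>
    rw [miuraOp_succ α n, miuraOp_succ α (n - 1), sub_add_cancel, miuraOp_succ (α + 1),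
      ih (by lia) n, ih (by lia) (n + 1), add_sub_cancel_right]
    simp only [mul_sub, smul_sub, shift_mul_smul, smul_smul]
    rw [H.xv_mul_yv hα]
    have hmid := congrArg (· • (shift R * miuraOp M Mi α n)) (H.xv_add_yv hα n)
    simp only [add_smul] at hmid
    linear_combination (norm := abel) -hmid

theorem miuraOp_top_eq (n n' : ℤ) : miuraOp M Mi (r + 1) n = miuraOp M Mi (r + 1) n' := by
  have hper : Function.Periodic (miuraOp M Mi (r + 1)) 1 := fun n => by
    rw [H.miuraOp_succ_eq_yv le_rfl, miuraOp_succ, H.xv_top, add_sub_cancel_right]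
  have hconst (n : ℤ) : miuraOp M Mi (r + 1) n = miuraOp M Mi (r + 1) 0 := by
    simpa using hper.int_mul_eq n
  rw [hconst n, hconst n']

theorem miuraCoeff_top_eq {m : ℕ} (hm : m ≤ r + 1) (n n' : ℤ) :
    miuraCoeff M Mi (r + 1) m n = miuraCoeff M Mi (r + 1) m n' := by
  have h := congrFun (congrArg (· (Pi.single 0 1)) (H.miuraOp_top_eq n n')) (m : ℤ)
  simp only [miuraOp_apply_single hm] at h
  exact ((isUnit_one.neg).pow m).mul_left_cancel h

theorem miuraOp_apply_fundamental {α : ℕ} (hα : α ≤ r + 1) (n : ℤ) :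
    miuraOp M Mi α n (M 1) n = M (α + 1) n * Mi α n ∧
      ∀ b, n < b → b ≤ n + α → miuraOp M Mi α n (M 1) b = 0 := by
  induction α generalizing n with
  | zero => exact ⟨by simp [miuraOp, H.inv_zero_eq_one], by lia⟩
  | succ α ih =>
    have ih := ih (by lia)
    constructor
    · calc miuraOp M Mi (α + 1) n (M 1) n
          = miuraOp M Mi α n (M 1) n -
              yv M Mi (α + 1) n * miuraOp M Mi α (n - 1) (M 1) (n - 1) := by
            rw [H.miuraOp_succ_eq_yv (by lia)]; rfl
        _ = (M (α + 1) n - xivInv M Mi (α + 1) n * M (α + 1) (n - 1)) * Mi α n := by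
            rw [(ih n).1, (ih (n - 1)).1, yv, Nat.add_sub_cancel, mul_assoc,
              H.xiv_mul_ratio (by lia), sub_add_cancel, sub_mul, mul_assoc]
        _ = M (α + 2) n * Mi (α + 1) n := by
            rw [H.sub_xivInv_mul_pred (by lia), mul_assoc, H.mul_inv _ _ (by lia), mul_one]
    · intro b hb hb'
      rw [miuraOp_succ_apply]
      obtain rfl | hb := (Int.add_one_le_of_lt hb).eq_or_lt
      · rw [(ih (n + 1)).1, add_sub_cancel_right, (ih n).1, xv, Nat.add_sub_cancel, mul_assoc,
          H.xiv_mul_ratio (by lia), ← mul_assoc, H.xivInv_mul_self hα, sub_self]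
      · rw [(ih (n + 1)).2 b hb (by lia), (ih n).2 (b - 1) (by lia) (by lia), mul_zero, sub_zero]

theorem miuraOp_top_apply_fundamental (n b : ℤ) : miuraOp M Mi (r + 1) n (M 1) b = 0 := by
  rw [H.miuraOp_top_eq n b, (H.miuraOp_apply_fundamental le_rfl b).1, H.top_eq_zero, zero_mul]

end QuantumMSystem

section Intertwining

variable {R : Type*} [Ring R] {q u v x : R} {L L' : Module.End Rᵐᵒᵖ (ℤ → R)}

/-- The exchange relation `(u - v T) L = L u - q T L v`, with `u` and `v` acting by left
multiplication: it moves a pair of coefficients to the other side of `L`. -/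
def Intertwines (q u v : R) (L : Module.End Rᵐᵒᵖ (ℤ → R)) : Prop :=
  u • L - v • (shift R * L) = L * u • 1 - q • (shift R * L * v • 1)

theorem Intertwines.sub_smul_shift_mul (hq : ∀ x : R, Commute q x) (hux : Commute u x)
    (hvx : Commute v x) (hL : Intertwines q u v L) (hL' : Intertwines q u v L') :
    Intertwines q u v (L - x • (shift R * L')) := by
  have hL'' := congrArg (fun K => x • (shift R * K)) hL'
  simp only [Intertwines, mul_sub, sub_mul, smul_sub, smul_mul_assoc, shift_mul_smul, smul_smul,
    hux.eq, hvx.eq, (hq x).eq, mul_assoc] at hL hL'' ⊢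
  linear_combination (norm := abel) hL - hL''

/-- The `2 × 2` quantum minor of the sequence `f`, with rows starting at `x` and `y`. -/
def qMinor (q : R) (f : ℤ → R) (x y : ℤ) : R :=
  f x * f y - q * (f (x + 1) * f (y - 1))

end Intertwining

namespace QuantumMSystem

variable {R : Type*} [Ring R] {q : Rˣ} {r : ℕ} {M Mi : ℕ → ℤ → R} (H : QuantumMSystem q r M Mi)
include H

theorem fundamental_mul_succ (n : ℤ) :
    M 1 n * M 1 (n + 1) = q * (M 1 (n + 1) * M 1 n) := by
  simpa [QCommute] using H.qCommute_self (Nat.le_add_left 1 r) n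

theorem qCommute_two_succ (n : ℤ) : QCommute q 1 (M 2 n) (M 1 (n + 1)) := by
  obtain rfl | hr := r.eq_zero_or_pos
  · simp [QCommute, H.top_eq_zero]
  · simpa using H.qCommute 2 1 n (n + 1) (by lia) (by lia) (by simp)

theorem fundamental_pred_mul_succ (n : ℤ) :
    M 1 (n - 1) * M 1 (n + 1) = q * (M 1 n * M 1 n) - M 2 n := by
  have hunit : IsUnit ((q : R) * M 1 (n + 1)) := q.isUnit.mul
    ⟨⟨_, _, H.mul_inv 1 (n + 1) (by lia), H.inv_mul 1 (n + 1) (by lia)⟩, rfl⟩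
  have hsq : QCommute q 2 (M 1 n * M 1 n) (M 1 (n + 1)) := by
    have h := (H.qCommute_self (Nat.le_add_left 1 r) n).symm
    simpa using (h.mul_right H.central h).symm
  have hrec := H.recurrence 0 n (Nat.zero_le r)
  rw [H.zero_eq_one, zero_add, zero_add, pow_one, mul_one, pow_two] at hrec
  have htwo := H.qCommute_two_succ n
  simp only [QCommute, zpow_ofNat, Units.val_pow_eq_pow_val, pow_one] at hsq htwo
  apply hunit.mul_left_cancel
  rw [← mul_assoc, hrec, sub_mul, hsq, htwo, mul_sub, pow_two, mul_assoc, mul_assoc,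
    ((H.central (M 1 (n + 1))).symm.left_comm _), mul_assoc]

theorem qCommute_fundamental_ratio {α : ℕ} (hα : 1 ≤ α) (hα' : α ≤ r + 1) {x n n' : ℤ}
    (hn : |n - x| ≤ α) (hn' : |n' - x| ≤ α) :
    QCommute q (n' - n) (M 1 x) (M α n' * Mi α n) := by
  have h {k : ℤ} (hk : |k - x| ≤ α) : QCommute q (k - x) (M 1 x) (M α k) := by
    have hk' : |k - x| ≤ |(α : ℤ) - (1 : ℕ)| + 1 :=
      hk.trans (by grind)
    simpa [hα] using H.qCommute 1 α x k (by lia) hα' hk'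
  have hinv := (h hn).inv_right H.central (H.mul_inv _ _ hα') (H.inv_mul _ _ hα')
  convert (h hn').mul_right H.central hinv using 1
  ring

theorem commute_fundamental_xv {β : ℕ} (hβ : β + 1 ≤ r) {n x : ℤ} (hx : x = n ∨ x = n + 1) :
    Commute (M 1 x) (xv M Mi (β + 2) n) := by
  have h := (H.qCommute_fundamental_ratio (α := β + 2) (n := n) (n' := n + 1) (x := x)
    (by lia) (by lia) (by grind) (by grind)).mul_right H.central
      (H.qCommute_fundamental_ratio (α := β + 1) (n := n + 1) (n' := n) (x := x)
        (by lia) (by lia) (by grind) (by grind))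
  exact QCommute.commute (q := q) (by simpa [xv, xiv, xivInv] using h)

theorem commute_fundamental_yv {β : ℕ} (hβ : β + 1 ≤ r) {n x : ℤ} (hx : x = n - 1 ∨ x = n) :
    Commute (M 1 x) (yv M Mi (β + 2) n) := by
  have h := (H.qCommute_fundamental_ratio (α := β + 2) (n := n) (n' := n + 1) (x := x)
    (by lia) (by lia) (by grind) (by grind)).mul_right H.central
      (H.qCommute_fundamental_ratio (α := β + 1) (n := n) (n' := n - 1) (x := x)
        (by lia) (by lia) (by grind) (by grind))
  exact QCommute.commute (q := q) (by simpa [yv, xiv, xivInv] using h)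

theorem fundamental_mul_xivInv_add {n x : ℤ} (hx : x = n - 1 ∨ x = n) :
    M 1 x * xivInv M Mi 1 n + M 1 (x + 1) = xivInv M Mi 1 n * M 1 x + q * M 1 (x + 1) := by
  have hinv := H.mul_inv 1 n (by lia)
  obtain rfl | rfl := hx
  · have hpred : M 1 n - xivInv M Mi 1 n * M 1 (n - 1) = M 2 n * Mi 1 n := by
      simpa [H.zero_eq_one] using H.sub_xivInv_mul_pred (Nat.zero_le r) n
    have hmul : M 1 (n - 1) * xivInv M Mi 1 n = q * M 1 n - M 2 n * Mi 1 n := by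
      rw [xivInv, ← mul_assoc, H.fundamental_pred_mul_succ, sub_mul, mul_assoc, mul_assoc, hinv,
        mul_one]
    rw [sub_add_cancel, hmul, ← hpred]
    abel
  · rw [xivInv, ← mul_assoc, H.fundamental_mul_succ, mul_assoc, mul_assoc, hinv, mul_one,
      mul_assoc, H.inv_mul 1 x (by lia), mul_one, add_comm]

theorem fundamental_succ_mul_xivInv {n x : ℤ} (hx : x = n - 1 ∨ x = n) :
    M 1 (x + 1) * xivInv M Mi 1 n = q * (xivInv M Mi 1 n * M 1 (x + 1)) := by
  have h := H.qCommute_fundamental_ratio (α := 1) (n := n) (n' := n + 1) (x := x + 1)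
    le_rfl (by lia) (by grind) (by grind)
  simpa [QCommute, xivInv] using h

theorem intertwines_miuraOp_one {n x : ℤ} (hx : x = n - 1 ∨ x = n) :
    Intertwines (q : R) (M 1 x) (M 1 (x + 1)) (miuraOp M Mi 1 n) := by
  have hop : miuraOp M Mi 1 n = 1 - xivInv M Mi 1 n • shift R := by
    rw [miuraOp_succ, miuraOp, miuraOp, mul_one, xv, zero_add, Nat.sub_self, H.xiv_zero, mul_one]
  have hone := congrArg (· • shift R) (H.fundamental_mul_xivInv_add hx)
  have htwo := congrArg (· • (shift R * shift R)) (H.fundamental_succ_mul_xivInv hx)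
  have hsmul (u : R) : shift R * u • (1 : Module.End Rᵐᵒᵖ (ℤ → R)) = u • shift R := rfl
  simp only [Intertwines, hop, add_smul, smul_sub, mul_sub, sub_mul, mul_one, one_mul,
    smul_mul_assoc, mul_assoc, shift_mul_smul, smul_smul, hsmul] at hone htwo ⊢
  linear_combination (norm := abel) htwo - hone

theorem intertwines_miuraOp {α : ℕ} (hα : α ≤ r) {n x : ℤ} (hx : x = n - 1 ∨ x = n) :
    Intertwines (q : R) (M 1 x) (M 1 (x + 1)) (miuraOp M Mi (α + 1) n) := by
  induction α generalizing n with
  | zero => exact H.intertwines_miuraOp_one hx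
  | succ α ih =>
    have ih {n : ℤ} (hx : x = n - 1 ∨ x = n) := ih (n := n) (by lia) hx
    obtain rfl | rfl := hx
    · rw [H.miuraOp_succ_eq_yv hα]
      exact (ih (.inl rfl)).sub_smul_shift_mul H.central
        (H.commute_fundamental_yv hα (by simp))
        (H.commute_fundamental_yv hα (by simp)) (ih (.inr rfl))
    · rw [miuraOp_succ]
      exact (ih (.inl (by lia))).sub_smul_shift_mul H.central
        (H.commute_fundamental_xv hα (by simp))
        (H.commute_fundamental_xv hα (by simp)) (ih (.inr rfl))

theorem qMinor_self_succ (x : ℤ) : qMinor (q : R) (M 1) x (x + 1) = 0 := by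
  rw [qMinor, H.fundamental_mul_succ, add_sub_cancel_right, sub_self]

theorem miuraOp_qMinor_right {α : ℕ} (hα : α ≤ r) {n b : ℤ}
    (hb : miuraOp M Mi (α + 1) n (M 1) b = 0) (hb' : miuraOp M Mi (α + 1) n (M 1) (b - 1) = 0) :
    miuraOp M Mi (α + 1) n (fun y => qMinor (q : R) (M 1) (n - 1) y) b = 0 := by
  have hsplit : (fun y => qMinor (q : R) (M 1) (n - 1) y) = M 1 (n - 1) • M 1 -
      MulOpposite.op (q : R) • fun y => (M 1 (n - 1 + 1) • M 1) (y - 1) := by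
    funext y
    simp [qMinor, (H.central _).eq]
  have hL := congrFun (congrArg (· (M 1)) (H.intertwines_miuraOp hα (.inl rfl) (n := n))) b
  calc miuraOp M Mi (α + 1) n (fun y => qMinor (q : R) (M 1) (n - 1) y) b
      = miuraOp M Mi (α + 1) n (M 1 (n - 1) • M 1) b -
          q * miuraOp M Mi (α + 1) n (M 1 (n - 1 + 1) • M 1) (b - 1) := by
        rw [hsplit, map_sub, map_smul _ (MulOpposite.op (q : R)), Pi.sub_apply, Pi.smul_apply,
          miuraOp_comp_sub, op_smul_eq_mul, (H.central _).eq]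
    _ = M 1 (n - 1) * miuraOp M Mi (α + 1) n (M 1) b -
          M 1 (n - 1 + 1) * miuraOp M Mi (α + 1) n (M 1) (b - 1) := hL.symm
    _ = 0 := by rw [hb, hb', mul_zero, mul_zero, sub_zero]

theorem miuraOp_qMinor_left {α : ℕ} {n b x : ℤ}
    (hb : miuraOp M Mi α n (M 1) b = 0) (hb' : miuraOp M Mi α n (M 1) (b - 1) = 0) :
    miuraOp M Mi α n (fun y => qMinor (q : R) (M 1) (y - 1) x) b = 0 := by
  have hsplit : (fun y => qMinor (q : R) (M 1) (y - 1) x) =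
      MulOpposite.op (M 1 x) • (fun y => M 1 (y - 1)) -
        MulOpposite.op ((q : R) * M 1 (x - 1)) • M 1 := by
    funext y
    simp [qMinor, (H.central (M 1 y)).left_comm]
  rw [hsplit, map_sub, map_smul, map_smul, Pi.sub_apply, Pi.smul_apply, Pi.smul_apply,
    miuraOp_comp_sub, hb, hb', smul_zero, smul_zero, sub_zero]

theorem qMinor_add_swap_of_nat (g : ℕ) (x : ℤ) :
    qMinor (q : R) (M 1) x (x + 1 + g) + qMinor (q : R) (M 1) (x + 1 + g - 1) (x + 1) = 0 := by
  induction g using Nat.strong_induction_on with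
  | _ g ih =>
  obtain rfl | rfl | hg : g = 0 ∨ g = 1 ∨ 2 ≤ g := by lia
  · simp [H.qMinor_self_succ]
  · have h := H.fundamental_pred_mul_succ (x + 1)
    have h' := H.recurrence 0 (x + 1) (Nat.zero_le r)
    simp only [add_sub_cancel_right, zero_add, pow_one, pow_two, H.zero_eq_one, mul_one] at h h'
    simp only [qMinor, Nat.cast_one, add_sub_cancel_right, h, ← mul_assoc, h']
    abel
  · obtain ⟨α, hα, hαg, hor⟩ : ∃ α ≤ r, α + 1 ≤ g ∧ (α + 1 = g ∨ α = r) :=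
      ⟨min (g - 1) r, by lia, by lia, by lia⟩
    have hzero (b : ℤ) (hb : x + 1 < b) (hb' : b ≤ x + 1 + g) :
        miuraOp M Mi (α + 1) (x + 1) (M 1) b = 0 := by
      obtain rfl | rfl := hor
      · exact (H.miuraOp_apply_fundamental (by lia) _).2 b hb hb'
      · exact H.miuraOp_top_apply_fundamental _ _
    have hbot := hzero (x + 1 + g) (by lia) le_rfl
    have hbot' := hzero (x + 1 + g - 1) (by lia) (by lia)
    have hright := H.miuraOp_qMinor_right hα hbot hbot'
    rw [add_sub_cancel_right] at hright
    have hlocal := miuraOp_apply_eq_self (M := M) (Mi := Mi) (α := α + 1) (b := x + 1 + g)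
      (f := (fun y => qMinor (q : R) (M 1) x y) + fun y => qMinor (q : R) (M 1) (y - 1) (x + 1))
      (fun y hy hy' => by
        obtain ⟨k, rfl⟩ := Int.le.dest (show x + 1 ≤ y by lia)
        exact ih k (by lia)) (x + 1)
    rw [map_add, Pi.add_apply, hright, H.miuraOp_qMinor_left hbot hbot', add_zero] at hlocal
    exact hlocal.symm

theorem qMinor_add_swap (x y : ℤ) :
    qMinor (q : R) (M 1) x y + qMinor (q : R) (M 1) (y - 1) (x + 1) = 0 := by
  obtain h | h := le_total (x + 1) y
  · obtain ⟨g, rfl⟩ := Int.le.dest h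
    exact H.qMinor_add_swap_of_nat g x
  · obtain ⟨g, hg⟩ := Int.le.dest h
    have hswap := H.qMinor_add_swap_of_nat g (y - 1)
    rwa [sub_add_cancel, hg, add_sub_cancel_right, add_comm] at hswap

end QuantumMSystem

section Alternating

variable {ι : Type*} {A : Type*} [AddCommGroup A] {n : ℕ} {F : (Fin (n + 1) → ι) → A}

theorem comp_perm_eq_sign_smul
    (hF : ∀ (l : Fin (n + 1) → ι) (i : Fin n), F (l ∘ Equiv.swap i.castSucc i.succ) = -F l)
    (σ : Equiv.Perm (Fin (n + 1))) (l : Fin (n + 1) → ι) :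
    F (l ∘ σ) = Equiv.Perm.sign σ • F l := by
  have hσ : σ ∈ Submonoid.closure
      (Set.range fun i : Fin n ↦ Equiv.swap i.castSucc i.succ) := by
    rw [Equiv.Perm.mclosure_swap_castSucc_succ]; trivial
  induction hσ using Submonoid.closure_induction generalizing l with
  | mem σ hσ =>
    obtain ⟨i, rfl⟩ := hσ
    rw [hF, Equiv.Perm.sign_swap (Fin.castSucc_lt_succ).ne, Units.neg_smul, one_smul]
  | one => simp
  | mul σ τ _ _ ihσ ihτ =>
    rw [Equiv.Perm.coe_mul, ← Function.comp_assoc, ihτ, ihσ, smul_smul, Equiv.Perm.sign_mul,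
      mul_comm]

theorem eq_zero_of_apply_eq
    (hF : ∀ (l : Fin (n + 1) → ι) (i : Fin n), F (l ∘ Equiv.swap i.castSucc i.succ) = -F l)
    (hF₀ : ∀ (l : Fin (n + 1) → ι) (i : Fin n), l i.castSucc = l i.succ → F l = 0)
    {l : Fin (n + 1) → ι} {i j : Fin (n + 1)} (hij : i < j) (hl : l i = l j) : F l = 0 := by
  obtain ⟨i, rfl⟩ : ∃ k : Fin n, i = k.castSucc :=
    ⟨i.castPred (Fin.ne_last_of_lt hij), by simp⟩
  have hadj := hF₀ (l ∘ Equiv.swap i.succ j) i (by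
    rw [Function.comp_apply, Function.comp_apply, Equiv.swap_apply_left,
      Equiv.swap_apply_of_ne_of_ne Fin.castSucc_lt_succ.ne hij.ne, hl])
  rwa [comp_perm_eq_sign_smul hF, smul_eq_zero_iff_eq] at hadj

end Alternating

section Exponents

theorem qvExp_eq_sum (α : ℕ) (S : Finset (Fin α × Fin α)) (i : Fin α) :
    qvExp α S i = ∑ p ∈ S, ((if p.2 = i then 1 else 0) - if p.1 = i then 1 else 0) := by
  rw [qvExp, Finset.sum_sub_distrib, Finset.card_filter, Finset.card_filter]
  push_cast
  rfl

theorem qvExp_insert {α : ℕ} {S : Finset (Fin α × Fin α)} {p : Fin α × Fin α} (hp : p ∉ S)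
    (i : Fin α) : qvExp α (insert p S) i =
      qvExp α S i + ((if p.2 = i then 1 else 0) - if p.1 = i then 1 else 0) := by
  rw [qvExp_eq_sum, qvExp_eq_sum, Finset.sum_insert hp, add_comm]

theorem qvExp_map {α β : ℕ} (e : Fin α ↪ Fin β) (S : Finset (Fin α × Fin α)) (i : Fin α) :
    qvExp β (S.map (e.prodMap e)) (e i) = qvExp α S i := by
  simp only [qvExp_eq_sum, Finset.sum_map, Function.Embedding.prodMap, Function.Embedding.coeFn_mk,
    Prod.map, e.apply_eq_iff_eq]

theorem mem_qvPairs {α : ℕ} {p : Fin α × Fin α} : p ∈ qvPairs α ↔ p.1 < p.2 := by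
  simp [qvPairs]

/-- The set of pairs `S` with the adjacent indices `i` and `i + 1` exchanged. -/
def swapPairs {n : ℕ} (i : Fin n) (S : Finset (Fin (n + 1) × Fin (n + 1))) :
    Finset (Fin (n + 1) × Fin (n + 1)) :=
  S.map ((Equiv.swap i.castSucc i.succ).toEmbedding.prodMap
    (Equiv.swap i.castSucc i.succ).toEmbedding)

variable {n : ℕ} {i : Fin n} {S : Finset (Fin (n + 1) × Fin (n + 1))}

theorem swapPairs_swapPairs : swapPairs i (swapPairs i S) = S := by
  ext ⟨a, b⟩
  simp [swapPairs, Function.Embedding.prodMap]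

theorem card_swapPairs : (swapPairs i S).card = S.card := Finset.card_map _

theorem qvExp_swapPairs (j : Fin (n + 1)) :
    qvExp (n + 1) (swapPairs i S) j = qvExp (n + 1) S (Equiv.swap i.castSucc i.succ j) := by
  simpa [swapPairs] using
    qvExp_map (Equiv.swap i.castSucc i.succ).toEmbedding S (Equiv.swap i.castSucc i.succ j)

theorem swapPairs_mem_powerset_erase
    (hS : S ∈ ((qvPairs (n + 1)).erase (i.castSucc, i.succ)).powerset) :
    swapPairs i S ∈ ((qvPairs (n + 1)).erase (i.castSucc, i.succ)).powerset := by
  rw [Finset.mem_powerset] at hS ⊢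
  intro p hp
  obtain ⟨⟨a, b⟩, hab, rfl⟩ := Finset.mem_map.1 hp
  have hab := hS hab
  change (Equiv.swap i.castSucc i.succ a, Equiv.swap i.castSucc i.succ b) ∈ _
  simp only [Finset.mem_erase, mem_qvPairs, ne_eq, Prod.mk.injEq, Fin.ext_iff, Fin.lt_def,
    Fin.val_castSucc, Fin.val_succ, Equiv.swap_apply_def, apply_ite Fin.val] at hab ⊢
  grind

end Exponents

section QuantumDet

variable {R : Type*} [Ring R]

/-- The quantum determinant of the sequence `f` with row indices `ν`: the image of `Δ_q(u)` under
`u ^ v ↦ f (ν_1 - v_1) ⋯ f (ν_α - v_α)`. A choice of terms in the product `Δ_q` is recorded by the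
set `S` of pairs contributing `-q u_b u_a⁻¹`. -/
def quantumDet (q : R) (f : ℤ → R) {α : ℕ} (ν : Fin α → ℤ) : R :=
  ∑ S ∈ (qvPairs α).powerset,
    (-q) ^ S.card * (List.ofFn fun i => f (ν i - qvExp α S i)).prod

/-- The two terms of a quantum determinant that differ by the choice made for the pair
`(i, i + 1)`. -/
def adjacentTerm (q : R) (f : ℤ → R) {n : ℕ} (i : Fin n) (w : Fin (n + 1) → ℤ) : R :=
  (List.ofFn fun j => f (w j)).prod - q * (List.ofFn fun j =>
    f (w j - ((if i.succ = j then 1 else 0) - if i.castSucc = j then 1 else 0))).prod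

variable {q : R} {f : ℤ → R} {n : ℕ}

theorem exists_prod_ofFn_eq (g : Fin (n + 1) → R) (i : Fin n) :
    ∃ A B : R, ∀ g' : Fin (n + 1) → R, (∀ j, j ≠ i.castSucc → j ≠ i.succ → g' j = g j) →
      (List.ofFn g').prod = A * (g' i.castSucc * g' i.succ) * B := by
  induction n with
  | zero => exact i.elim0
  | succ n ih =>
    cases i using Fin.cases with
    | zero =>
      refine ⟨1, (List.ofFn fun j : Fin n => g j.succ.succ).prod, fun g' hg' => ?_⟩
      have htail : (fun j : Fin n => g' j.succ.succ) = fun j => g j.succ.succ :=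
        funext fun j => hg' _ (Fin.succ_ne_zero _) (by simp [Fin.ext_iff])
      rw [List.ofFn_succ, List.ofFn_succ, List.prod_cons, List.prod_cons, htail, one_mul, mul_assoc]
      rfl
    | succ i =>
      obtain ⟨A, B, hAB⟩ := ih (fun j => g j.succ) i
      refine ⟨g 0 * A, B, fun g' hg' => ?_⟩
      rw [List.ofFn_succ, List.prod_cons, hAB (fun j => g' j.succ), hg' 0]
      · simp only [mul_assoc, Fin.castSucc_succ]
      · simp [Fin.ext_iff]
      · simp [Fin.ext_iff]
      · intro j hj hj'
        exact hg' _ (by simpa [Fin.ext_iff] using hj) (by simpa [Fin.ext_iff] using hj')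

theorem exists_adjacentTerm_eq (hq : ∀ x : R, Commute q x) (f : ℤ → R) (i : Fin n)
    (w : Fin (n + 1) → ℤ) :
    ∃ A B : R, ∀ w' : Fin (n + 1) → ℤ, (∀ j, j ≠ i.castSucc → j ≠ i.succ → w' j = w j) →
      adjacentTerm q f i w' = A * qMinor q f (w' i.castSucc) (w' i.succ) * B := by
  obtain ⟨A, B, hAB⟩ := exists_prod_ofFn_eq (fun j => f (w j)) i
  refine ⟨A, B, fun w' hw' => ?_⟩
  rw [adjacentTerm, hAB, hAB, qMinor, mul_sub, sub_mul]
  · simp [Fin.castSucc_lt_succ.ne, Fin.castSucc_lt_succ.ne', (hq A).left_comm, mul_assoc]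
  · intro j hj hj'
    simp [hj.symm, hj'.symm, hw' j hj hj']
  · intro j hj hj'
    simp [hw' j hj hj']

theorem quantumDet_eq_sum_adjacentTerm (i : Fin n) (ν : Fin (n + 1) → ℤ) :
    quantumDet q f ν = ∑ S ∈ ((qvPairs (n + 1)).erase (i.castSucc, i.succ)).powerset,
      (-q) ^ S.card * adjacentTerm q f i (fun j => ν j - qvExp (n + 1) S j) := by
  have hmem : (i.castSucc, i.succ) ∈ qvPairs (n + 1) := mem_qvPairs.2 Fin.castSucc_lt_succ
  rw [quantumDet, ← Finset.insert_erase hmem, Finset.sum_powerset_insert (Finset.notMem_erase _ _),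
    Finset.erase_insert (Finset.notMem_erase _ _), ← Finset.sum_add_distrib]
  refine Finset.sum_congr rfl fun S hS => ?_
  have hp : (i.castSucc, i.succ) ∉ S :=
    fun h => Finset.notMem_erase _ _ (Finset.mem_powerset.1 hS h)
  simp only [Finset.card_insert_of_notMem hp, qvExp_insert hp, adjacentTerm, mul_sub, pow_succ,
    sub_add_eq_sub_sub]
  rw [mul_assoc, neg_mul, mul_neg, ← sub_eq_add_neg]

theorem adjacentTerm_comp_swap (hq : ∀ x : R, Commute q x)
    (hswap : ∀ x y, qMinor q f x y + qMinor q f (y - 1) (x + 1) = 0) (i : Fin n)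
    (l e : Fin (n + 1) → ℤ) :
    adjacentTerm q f i (fun j => l (Equiv.swap i.castSucc i.succ j) + j - e j) =
      -adjacentTerm q f i (fun j => l j + j - e (Equiv.swap i.castSucc i.succ j)) := by
  obtain ⟨A, B, hAB⟩ := exists_adjacentTerm_eq hq f i
    (fun j => l j + j - e (Equiv.swap i.castSucc i.succ j))
  have hminor := hswap (l i.castSucc + i.castSucc - e i.succ) (l i.succ + i.succ - e i.castSucc)
  rw [hAB _ fun _ _ _ => rfl, hAB]
  · simp only [Equiv.swap_apply_left, Equiv.swap_apply_right]
    rw [← neg_mul, ← mul_neg, ← eq_neg_of_add_eq_zero_right hminor]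
    congr 3 <;> simp <;> ring
  · intro j hj hj'
    rw [Equiv.swap_apply_of_ne_of_ne hj hj']

theorem adjacentTerm_eq_zero (hq : ∀ x : R, Commute q x)
    (hself : ∀ x, qMinor q f x (x + 1) = 0) {i : Fin n} {w : Fin (n + 1) → ℤ}
    (hw : w i.succ = w i.castSucc + 1) : adjacentTerm q f i w = 0 := by
  obtain ⟨A, B, hAB⟩ := exists_adjacentTerm_eq hq f i w
  rw [hAB w fun _ _ _ => rfl, hw, hself, mul_zero, zero_mul]

theorem quantumDet_comp_swap (hq : ∀ x : R, Commute q x)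
    (hswap : ∀ x y, qMinor q f x y + qMinor q f (y - 1) (x + 1) = 0) (l : Fin (n + 1) → ℤ)
    (i : Fin n) :
    quantumDet q f (fun j => (l ∘ Equiv.swap i.castSucc i.succ) j + j) =
      -quantumDet q f (fun j => l j + j) := by
  rw [quantumDet_eq_sum_adjacentTerm i, quantumDet_eq_sum_adjacentTerm i, ← Finset.sum_neg_distrib]
  refine Finset.sum_nbij' (swapPairs i) (swapPairs i)
    (fun S hS => swapPairs_mem_powerset_erase hS) (fun S hS => swapPairs_mem_powerset_erase hS)
    (fun S _ => swapPairs_swapPairs) (fun S _ => swapPairs_swapPairs) fun S _ => ?_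
  simp only [card_swapPairs, qvExp_swapPairs, Function.comp_apply]
  rw [← mul_neg, adjacentTerm_comp_swap hq hswap]

theorem quantumDet_eq_zero_of_adjacent (hq : ∀ x : R, Commute q x)
    (hself : ∀ x, qMinor q f x (x + 1) = 0)
    (hswap : ∀ x y, qMinor q f x y + qMinor q f (y - 1) (x + 1) = 0) (l : Fin (n + 1) → ℤ)
    (i : Fin n) (hl : l i.castSucc = l i.succ) : quantumDet q f (fun j => l j + j) = 0 := by
  have hl' (j : Fin (n + 1)) : l (Equiv.swap i.castSucc i.succ j) = l j := by
    rw [Equiv.swap_apply_def]; split_ifs <;> simp_all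
  rw [quantumDet_eq_sum_adjacentTerm i]
  refine Finset.sum_involution (fun S _ => swapPairs i S) (fun S _ => ?_) (fun S _ hne hfix => ?_)
    (fun S hS => swapPairs_mem_powerset_erase hS) (fun S _ => swapPairs_swapPairs)
  · have hanti := adjacentTerm_comp_swap hq hswap i l (qvExp (n + 1) S)
    simp only [hl', ← qvExp_swapPairs] at hanti
    rw [card_swapPairs, hanti, mul_neg, neg_add_cancel]
  · have hexp : qvExp (n + 1) S i.castSucc = qvExp (n + 1) S i.succ := by
      rw [← hfix, qvExp_swapPairs, Equiv.swap_apply_left, hfix]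
    refine hne ?_
    rw [adjacentTerm_eq_zero hq hself, mul_zero]
    simp [hl, hexp]; ring

theorem quantumDet_comp_perm (hq : ∀ x : R, Commute q x)
    (hswap : ∀ x y, qMinor q f x y + qMinor q f (y - 1) (x + 1) = 0)
    (σ : Equiv.Perm (Fin (n + 1))) (l : Fin (n + 1) → ℤ) :
    quantumDet q f (fun j => l (σ j) + j) =
      Equiv.Perm.sign σ • quantumDet q f (fun j => l j + j) :=
  comp_perm_eq_sign_smul (F := fun l : Fin (n + 1) → ℤ => quantumDet q f fun j => l j + j)
    (quantumDet_comp_swap hq hswap) σ l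

theorem quantumDet_eq_zero_of_lt (hq : ∀ x : R, Commute q x)
    (hself : ∀ x, qMinor q f x (x + 1) = 0)
    (hswap : ∀ x y, qMinor q f x y + qMinor q f (y - 1) (x + 1) = 0) {ν : Fin (n + 1) → ℤ}
    {i j : Fin (n + 1)} (hij : i < j) (hν : ν i - i = ν j - j) : quantumDet q f ν = 0 := by
  simpa using eq_zero_of_apply_eq (F := fun l : Fin (n + 1) → ℤ => quantumDet q f fun j => l j + j)
    (quantumDet_comp_swap hq hswap) (quantumDet_eq_zero_of_adjacent hq hself hswap)
    (l := fun j => ν j - j) hij hν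

end QuantumDet

section ConsExpansion

variable {n : ℕ} {S : Finset (Fin (n + 1) × Fin (n + 1))}

theorem qvExp_zero_eq_neg_card (hS : S ⊆ qvPairs (n + 1)) :
    qvExp (n + 1) S 0 = -(S.filter fun p => p.1 = 0).card := by
  have hnone : S.filter (fun p => p.2 = 0) = ∅ :=
    Finset.filter_eq_empty_iff.2 fun p hp => ((Fin.zero_le _).trans_lt (mem_qvPairs.1 (hS hp))).ne'
  rw [qvExp, hnone, Finset.card_empty, Nat.cast_zero, zero_sub]

theorem neg_le_qvExp_zero (hS : S ⊆ qvPairs (n + 1)) : -(n : ℤ) ≤ qvExp (n + 1) S 0 := by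
  rw [qvExp_zero_eq_neg_card hS, neg_le_neg_iff, Nat.cast_le]
  calc (S.filter fun p => p.1 = 0).card
      ≤ (Finset.univ.erase (0 : Fin (n + 1))).card :=
        Finset.card_le_card_of_injOn Prod.snd
          (fun p hp => by
            have hlt := mem_qvPairs.1 (hS (Finset.mem_filter.1 hp).1)
            simpa using ((Fin.zero_le _).trans_lt hlt).ne')
          (fun p hp p' hp' h => Prod.ext
            ((Finset.mem_filter.1 hp).2.trans (Finset.mem_filter.1 hp').2.symm) h)
    _ = n := by simp

theorem map_succ_qvPairs (n : ℕ) :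
    (qvPairs n).map ((Fin.succEmb n).prodMap (Fin.succEmb n)) =
      (qvPairs (n + 1)).filter fun p => p.1 ≠ 0 := by
  ext ⟨a, b⟩
  cases a using Fin.cases <;> cases b using Fin.cases <;>
    simp [mem_qvPairs, Function.Embedding.prodMap]

theorem qvExp_zero_neg (hS : S ⊆ qvPairs (n + 1))
    (hS' : S ∉ ((qvPairs n).map ((Fin.succEmb n).prodMap (Fin.succEmb n))).powerset) :
    qvExp (n + 1) S 0 < 0 := by
  rw [qvExp_zero_eq_neg_card hS, neg_lt_zero, Nat.cast_pos, Finset.card_pos]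
  rw [map_succ_qvPairs, Finset.mem_powerset, Finset.subset_iff] at hS'
  push Not at hS'
  obtain ⟨p, hp, hp'⟩ := hS'
  refine ⟨p, Finset.mem_filter.2 ⟨hp, ?_⟩⟩
  by_contra h
  exact hp' (Finset.mem_filter.2 ⟨hS hp, h⟩)

theorem qvExp_map_succ_zero (S : Finset (Fin n × Fin n)) :
    qvExp (n + 1) (S.map ((Fin.succEmb n).prodMap (Fin.succEmb n))) 0 = 0 := by
  rw [qvExp_eq_sum]
  simp [Finset.sum_map, -Finset.sum_sub_distrib, Function.Embedding.prodMap]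

theorem sum_powerset_map {α β A : Type*} [AddCommMonoid A] (e : α ↪ β)
    (s : Finset α) (g : Finset β → A) :
    ∑ t ∈ (s.map e).powerset, g t = ∑ t ∈ s.powerset, g (t.map e) := by
  refine (Finset.sum_nbij (Finset.map e) (fun t ht => ?_) (Finset.map_injective e).injOn
    (fun t ht => ?_) fun t _ => rfl).symm
  · simpa using ht
  · obtain ⟨u, hu, rfl⟩ := Finset.subset_map_iff.1 (Finset.mem_powerset.1 ht)
    exact ⟨u, by simpa using hu, rfl⟩

variable {R : Type*} [Ring R] {q : R} {M Mi : ℕ → ℤ → R} {f : ℤ → R}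

theorem miuraOp_quantumDet_cons (hq : ∀ x : R, Commute q x) (α : ℕ) (k b : ℤ) (ν : Fin n → ℤ) :
    miuraOp M Mi α k (fun a => quantumDet q f (Fin.cons a ν : Fin (n + 1) → ℤ)) b =
      ∑ S ∈ (qvPairs (n + 1)).powerset, (-q) ^ S.card *
        (miuraOp M Mi α k f (b - qvExp (n + 1) S 0) *
          (List.ofFn fun j => f (ν j - qvExp (n + 1) S j.succ)).prod) := by
  simp only [miuraOp_apply, quantumDet, List.ofFn_succ, List.prod_cons, Fin.cons_zero,
    Fin.cons_succ, Finset.mul_sum, Finset.sum_mul]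
  rw [Finset.sum_comm]
  refine Finset.sum_congr rfl fun S _ => Finset.sum_congr rfl fun j _ => ?_
  have hpow (x : R) : Commute x ((-q) ^ S.card) := ((hq x).neg_left.pow_left _).symm
  rw [(hpow _).left_comm, (hpow _).left_comm, sub_right_comm, mul_assoc, mul_assoc]

/-- Only the monomials without a pair `(0, j)` survive, since any other one has a negative exponent
of `u_0`. -/
theorem miuraOp_quantumDet_cons_of_vanishing (hq : ∀ x : R, Commute q x) {α : ℕ} {k b : ℤ}
    (hf : ∀ a, b < a → a ≤ b + n → miuraOp M Mi α k f a = 0) (ν : Fin n → ℤ) :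
    miuraOp M Mi α k (fun a => quantumDet q f (Fin.cons a ν : Fin (n + 1) → ℤ)) b =
      miuraOp M Mi α k f b * quantumDet q f ν := by
  have hsub : (qvPairs n).map ((Fin.succEmb n).prodMap (Fin.succEmb n)) ⊆ qvPairs (n + 1) := by
    rw [map_succ_qvPairs]
    exact Finset.filter_subset _ _
  rw [miuraOp_quantumDet_cons hq, ← Finset.sum_subset (Finset.powerset_mono.2 hsub),
    sum_powerset_map, quantumDet, Finset.mul_sum]
  · refine Finset.sum_congr rfl fun S _ => ?_
    simp only [Finset.card_map, qvExp_map_succ_zero, sub_zero, ← Fin.coe_succEmb, qvExp_map]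
    exact ((hq _).neg_left.pow_left _).left_comm _
  · intro S hS hS'
    have hS := Finset.mem_powerset.1 hS
    have hlt := qvExp_zero_neg hS hS'
    have hle := neg_le_qvExp_zero hS
    rw [hf _ (by lia) (by lia), zero_mul, mul_zero]

end ConsExpansion

/-- The row indices `n + e_i(m)`, the first `m` of which carry the defect `1`. -/
def defectRow (m : ℕ) (n : ℤ) {α : ℕ} (i : Fin α) : ℤ :=
  n + if (i : ℕ) < m then 1 else 0

theorem defectRow_zero (n : ℤ) {α : ℕ} : (defectRow 0 n : Fin α → ℤ) = fun _ => n := by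
  funext i
  simp [defectRow]

theorem defectRow_succ_eq_cons (m : ℕ) (n : ℤ) {β : ℕ} :
    (defectRow (m + 1) n : Fin (β + 1) → ℤ) = Fin.cons (n + 1) (defectRow m n) := by
  funext i
  cases i using Fin.cases <;> simp [defectRow]

namespace QuantumMSystem

variable {R : Type*} [Ring R] {q : Rˣ} {r : ℕ} {M Mi : ℕ → ℤ → R} (H : QuantumMSystem q r M Mi)
include H

theorem quantumDet_cons_eq_zero {β : ℕ} {a : ℤ} {ν : Fin β → ℤ} (j : Fin β)
    (hj : a + j + 1 = ν j) :
    quantumDet (q : R) (M 1) (Fin.cons a ν : Fin (β + 1) → ℤ) = 0 := by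
  refine quantumDet_eq_zero_of_lt H.central H.qMinor_self_succ H.qMinor_add_swap (Fin.succ_pos j) ?_
  simp only [Fin.cons_zero, Fin.cons_succ, Fin.val_zero, Fin.val_succ]
  lia

theorem quantumDet_const {α : ℕ} (hα : α ≤ r + 1) (n : ℤ) :
    quantumDet (q : R) (M 1) (fun _ : Fin α => n) = M α n := by
  induction α with
  | zero => simp [quantumDet, qvPairs, H.zero_eq_one]
  | succ α ih =>
    have hcons : (fun _ : Fin (α + 1) => n) = Fin.cons n fun _ : Fin α => n := by
      funext i
      cases i using Fin.cases <;> rfl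
    obtain ⟨hself, hvanish⟩ := H.miuraOp_apply_fundamental (α := α) (by lia) n
    calc quantumDet (q : R) (M 1) (fun _ : Fin (α + 1) => n)
        = miuraOp M Mi α n
            (fun a => quantumDet (q : R) (M 1) (Fin.cons a fun _ : Fin α => n)) n := by
          rw [hcons, miuraOp_apply_eq_self]
          intro a ha ha'
          exact H.quantumDet_cons_eq_zero ⟨(n - a - 1).toNat, by lia⟩ (by simp; lia)
      _ = M (α + 1) n * Mi α n * M α n := by
          rw [miuraOp_quantumDet_cons_of_vanishing H.central hvanish, hself, ih (by lia)]
      _ = M (α + 1) n := by rw [mul_assoc, H.inv_mul _ _ (by lia), mul_one]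

theorem quantumDet_cons_sub_defectRow {β m : ℕ} (hm : m ≤ β) (n : ℤ) :
    quantumDet (q : R) (M 1) (Fin.cons (n - m) (defectRow m n) : Fin (β + 1) → ℤ) =
      (-1) ^ m * quantumDet (q : R) (M 1) (fun _ : Fin (β + 1) => n) := by
  have hperm := quantumDet_comp_perm H.central H.qMinor_add_swap
    (Fin.cycleRange (⟨m, by lia⟩ : Fin (β + 1))).symm (fun j => n - j)
  rw [Equiv.Perm.sign_symm, Fin.sign_cycleRange, Units.smul_def, Units.val_pow_eq_pow_val,
    zsmul_eq_mul] at hperm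
  simp only [sub_add_cancel] at hperm
  push_cast at hperm
  rw [← hperm]
  congr 1
  funext j
  cases j using Fin.cases with
  | zero => simp
  | succ j =>
    rw [Fin.cons_succ, Fin.cycleRange_symm_succ, Fin.succAbove, defectRow]
    split_ifs <;> simp_all [Fin.lt_def] <;> lia

theorem quantumDet_cons_sub_defectRow_of_ne {β m k : ℕ} (hk : k ≤ β) (hm : m ≤ β) (hkm : k ≠ m)
    (n : ℤ) :
    quantumDet (q : R) (M 1) (Fin.cons (n - k) (defectRow m n) : Fin (β + 1) → ℤ) = 0 := by
  obtain hlt | hgt := hkm.lt_or_gt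
  · exact H.quantumDet_cons_eq_zero ⟨k, by lia⟩ (by simp [defectRow, hlt])
  · exact H.quantumDet_cons_eq_zero ⟨k - 1, by lia⟩ (by simp only [defectRow]; grind)

theorem quantumDet_defectRow {α m : ℕ} (hα : α ≤ r + 1) (hm : m ≤ α) (n : ℤ) :
    quantumDet (q : R) (M 1) (defectRow m n : Fin α → ℤ) = miuraCoeff M Mi α m n * M α n := by
  obtain _ | m := m
  · simpa [defectRow_zero] using H.quantumDet_const hα n
  obtain _ | β := α
  · lia
  have hvanish := (H.miuraOp_apply_fundamental hα n).2
  have hsum : miuraOp M Mi (β + 1) n (fun a =>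
      quantumDet (q : R) (M 1) (Fin.cons a (defectRow m n) : Fin (β + 1) → ℤ)) (n + 1) = 0 := by
    rw [miuraOp_quantumDet_cons_of_vanishing H.central fun a ha ha' => hvanish a (by lia) (by lia),
      hvanish _ (by lia) (by lia), zero_mul]
  rw [miuraOp_apply, Finset.sum_range_succ', Finset.sum_eq_single_of_mem m (by simp; lia)] at hsum
  · rw [Nat.cast_succ, add_sub_add_right_eq_sub, H.quantumDet_cons_sub_defectRow (by lia),
      H.quantumDet_const hα, ((Commute.neg_one_right _).pow_right m).left_comm, ← mul_assoc,
      pow_succ, mul_neg_one, neg_mul, ← pow_add, Even.neg_one_pow ⟨m, rfl⟩] at hsum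
    rw [defectRow_succ_eq_cons]
    exact (neg_add_eq_zero.1 (by simpa using hsum)).symm
  · intro k hk hkm
    rw [Nat.cast_succ, add_sub_add_right_eq_sub,
      H.quantumDet_cons_sub_defectRow_of_ne (by simp at hk; lia) (by lia) hkm, mul_zero, mul_zero]

end QuantumMSystem

section MiuraExpansion

theorem sort_insert_of_forall_lt {ι : Type*} [LinearOrder ι] {S : Finset ι} {a : ι}
    (h : ∀ b ∈ S, b < a) :
    (insert a S).sort (· ≤ ·) = S.sort (· ≤ ·) ++ [a] := by
  have ha : a ∉ S := fun ha => lt_irrefl a (h a ha)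
  refine List.Perm.eq_of_pairwise' (r := (· ≤ ·)) (Finset.pairwise_sort _ _) ?_ ?_
  · rw [List.pairwise_append]
    exact ⟨Finset.pairwise_sort _ _, List.pairwise_singleton _ _,
      by simpa using fun b hb => (h b hb).le⟩
  · refine (Finset.sort_perm_toList _ _).trans ((Finset.toList_insert ha).trans ?_)
    exact ((Finset.sort_perm_toList _ _).symm.cons a).trans (List.perm_append_singleton a _).symm

variable {R : Type*} [Ring R] (M Mi : ℕ → ℤ → R)

/-- The summand of the Miura coefficient indexed by `S`: the product of the
`x_{α_j, n + (α - α_j) - (j - 1)}` over the elements `α_1 > α_2 > ⋯` of `S`. -/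
def miuraMonomial (α : ℕ) (n : ℤ) (S : Finset ℕ) : R :=
  (((S.sort (· ≤ ·)).reverse.zipIdx).map
    (fun ji => xv M Mi ji.1 (n + ((α : ℤ) - (ji.1 : ℤ)) - (ji.2 : ℤ)))).prod

theorem miuraMonomial_succ (α : ℕ) (n : ℤ) (S : Finset ℕ) :
    miuraMonomial M Mi (α + 1) n S = miuraMonomial M Mi α (n + 1) S := by
  simp only [miuraMonomial]
  congr 2
  funext ji
  congr 1
  push_cast; ring

theorem miuraMonomial_insert {α : ℕ} {S : Finset ℕ} (hS : S ⊆ Finset.Icc 1 α) (n : ℤ) :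
    miuraMonomial M Mi (α + 1) n (insert (α + 1) S) =
      xv M Mi (α + 1) n * miuraMonomial M Mi α n S := by
  have hmax : ∀ b ∈ S, b < α + 1 := fun b hb => Nat.lt_succ_of_le (Finset.mem_Icc.1 (hS hb)).2
  rw [miuraMonomial, sort_insert_of_forall_lt hmax, List.reverse_append, List.reverse_singleton,
    List.singleton_append, List.zipIdx_cons', List.map_cons, List.prod_cons, List.map_map]
  congr 1
  · simp
  · rw [miuraMonomial]
    congr 2
    funext ji
    simp only [Function.comp, Prod.map, id]
    congr 1
    push_cast; ring

theorem sum_miuraMonomial (α m : ℕ) (n : ℤ) :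
    ∑ S ∈ Finset.powersetCard m (Finset.Icc 1 α), miuraMonomial M Mi α n S =
      miuraCoeff M Mi α m n := by
  induction α generalizing m n with
  | zero =>
    obtain _ | m := m
    · simp [miuraMonomial]
    · rw [Finset.powersetCard_eq_empty.2 (by simp), Finset.sum_empty, miuraCoeff]
  | succ α ih =>
    obtain _ | m := m
    · simp [miuraMonomial]
    have hmem : α + 1 ∉ Finset.Icc 1 α := by simp
    have hnotMem {k : ℕ} {S : Finset ℕ} (hS : S ∈ Finset.powersetCard k (Finset.Icc 1 α)) :
        α + 1 ∉ S := fun h => hmem ((Finset.mem_powersetCard.1 hS).1 h)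
    rw [← Finset.insert_Icc_right_eq_Icc_add_one (by lia), Finset.powersetCard_succ_insert hmem,
      Finset.sum_union, Finset.sum_image, miuraCoeff, ← ih, ← ih, Finset.mul_sum]
    · congr 1
      · exact Finset.sum_congr rfl fun S _ => miuraMonomial_succ M Mi α n S
      · exact Finset.sum_congr rfl fun S hS =>
          miuraMonomial_insert M Mi (Finset.mem_powersetCard.1 hS).1 n
    · intro S hS T hT h
      rw [← Finset.erase_insert (hnotMem hS), h, Finset.erase_insert (hnotMem hT)]
    · rw [Finset.disjoint_left]
      rintro _ hS hS'
      obtain ⟨T, _, rfl⟩ := Finset.mem_image.1 hS'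
      exact hnotMem hS (Finset.mem_insert_self _ _)

theorem CMiura_eq_miuraCoeff (r m : ℕ) (n : ℤ) :
    CMiura M Mi r m n = miuraCoeff M Mi (r + 1) m n := by
  simp only [← sum_miuraMonomial, miuraMonomial, CMiura, Nat.cast_succ]

end MiuraExpansion

theorem quantum_Q_conserved_quantities_as_quantum_determinants
    {R : Type*} [Ring R] (q A Δ : Rˣ)
    (hq : ∀ x : R, (q : R) * x = x * (q : R))
    (r : ℕ) (hr : 1 ≤ r)
    (M Mi : ℕ → ℤ → R)
    (hM0 : ∀ n : ℤ, M 0 n = 1)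
    (hMtop : ∀ n : ℤ, M (r + 2) n = 0)
    (hMiL : ∀ (α : ℕ) (n : ℤ), α ≤ r + 1 → M α n * Mi α n = 1)
    (hMiR : ∀ (α : ℕ) (n : ℤ), α ≤ r + 1 → Mi α n * M α n = 1)
    (hMsys : ∀ (α : ℕ) (n : ℤ), 1 ≤ α → α ≤ r + 1 →
      (q : R) ^ α * M α (n + 1) * M α (n - 1) = M α n ^ 2 - M (α + 1) n * M (α - 1) n)
    (hcom : ∀ (α β ε : ℕ) (n : ℤ), ε ≤ 1 → α ≤ r + 1 → β ≤ r + 1 →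
      M α n * M β (n + (ε : ℤ)) = (q : R) ^ (ε * min α β) * M β (n + (ε : ℤ)) * M α n)
    (hAΔ : ∀ n : ℤ, M (r + 1) n = ((A ^ n : Rˣ) : R) * (Δ : R))
    (hΔM : ∀ (α : ℕ) (n : ℤ), 1 ≤ α → α ≤ r + 1 →
      (Δ : R) * M α n = ((q ^ ((α : ℤ) * n) : Rˣ) : R) * M α n * (Δ : R))
    (hAM : ∀ (α : ℕ) (n : ℤ), 1 ≤ α → α ≤ r + 1 →
      (A : R) * M α n = ((q ^ (-(α : ℤ)) : Rˣ) : R) * M α n * (A : R))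
    (hΔA : (Δ : R) * (A : R) = (q : R) ^ (r + 1) * (A : R) * (Δ : R))
    (hext : ∀ (α β : ℕ) (n p : ℤ), α ≤ r + 1 → β ≤ r + 1 →
      |p| ≤ |(β : ℤ) - (α : ℤ)| + 1 →
      M α n * M β (n + p) = ((q ^ (p * ((min α β : ℕ) : ℤ)) : Rˣ) : R) * M β (n + p) * M α n) :
    ∀ m : ℕ, m ≤ r + 1 →
      (∀ n : ℤ,
        CMiura M Mi r m 0 * M (r + 1) n
          = ∑ S ∈ (qvPairs (r + 1)).powerset,
              (-(q : R)) ^ S.card *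
                (List.ofFn fun i : Fin (r + 1) =>
                  M 1 (n + (if (i : ℕ) < m then 1 else 0) - qvExp (r + 1) S i)).prod)
      ∧ CMiura M Mi r m 0
          = (∑ S ∈ (qvPairs (r + 1)).powerset,
              (-(q : R)) ^ S.card *
                (List.ofFn fun i : Fin (r + 1) =>
                  M 1 ((if (i : ℕ) < m then 1 else 0) - qvExp (r + 1) S i)).prod)
              * ((Δ⁻¹ : Rˣ) : R) := by
  have H : QuantumMSystem q r M Mi :=
    { central := hq
      zero_eq_one := hM0
      top_eq_zero := hMtop
      mul_inv := hMiL
      inv_mul := hMiR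
      recurrence := fun β n hβ => hMsys (β + 1) n (Nat.le_add_left 1 β) (Nat.succ_le_succ hβ)
      qCommute := fun α β m n hα hβ hmn => by
        simpa [QCommute, mul_assoc] using hext α β m (n - m) hα hβ hmn }
  intro m hm
  have hdet (n : ℤ) : CMiura M Mi r m 0 * M (r + 1) n =
      quantumDet (q : R) (M 1) (defectRow m n : Fin (r + 1) → ℤ) := by
    rw [CMiura_eq_miuraCoeff, H.miuraCoeff_top_eq hm 0 n, H.quantumDet_defectRow le_rfl hm]
  refine ⟨hdet, ?_⟩
  have hΔ : M (r + 1) 0 = Δ := by rw [hAΔ, zpow_zero, Units.val_one, one_mul]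
  have hdet₀ := hdet 0
  simp only [hΔ, quantumDet, defectRow, zero_add] at hdet₀
  rw [← hdet₀, Units.mul_inv_cancel_right]
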